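/- Let H = K_{n₁,n₂,…,n_k} be the complete k-partite graph with parts of sizes n₁,…,n_k ≥ 1, and for each j let g_j(λ) = ∏_{i≠j}(n_i + λ). Then the coronal of H is χ_H(λ) = (∑_{j=1}^k n_j g_j(λ)) / (∏_{i=1}^k (n_i + λ) − ∑_{j=1}^k n_j g_j(λ)) as an element of ℂ(λ). -/

import Mathlib

open Matrix Polynomial

/-- The characteristic matrix `λ I - B` of `B`, over the field `ℂ(λ)` of rational functions. -/
noncomputable def charMatRatFunc {V : Type*} [Fintype V] [DecidableEq V]
    (B : Matrix V V ℂ) : Matrix V V (RatFunc ℂ) :=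
  Matrix.scalar V (RatFunc.X : RatFunc ℂ) - B.map (algebraMap ℂ (RatFunc ℂ))

/-- The coronal of a matrix `B`: the sum of the entries of `(λ I - B)⁻¹` over `ℂ(λ)`. -/
noncomputable def coronal {V : Type*} [Fintype V] [DecidableEq V]
    (B : Matrix V V ℂ) : RatFunc ℂ :=
  ∑ i, ∑ j, (charMatRatFunc B)⁻¹ i j

/-- The adjacency matrix of the corona `G ∘ H`. -/
def coronaMatrix {α β : Type*} (A : Matrix α α ℂ) (B : Matrix β β ℂ)
    [DecidableEq α] :
    Matrix (α ⊕ β × α) (α ⊕ β × α) ℂ :=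
  Matrix.fromBlocks A
    (Matrix.of fun i p => if i = p.2 then 1 else 0)
    (Matrix.of fun p j => if p.2 = j then 1 else 0)
    (Matrix.of fun p q => if p.2 = q.2 then B p.1 q.1 else 0)


/-- The adjacency matrix of the complete `k`-partite graph `K_{n₁,…,n_k}`: two vertices are
adjacent exactly when they lie in different parts. -/
def completeMultipartiteMatrix {k : ℕ} (n : Fin k → ℕ) :
    Matrix ((j : Fin k) × Fin (n j)) ((j : Fin k) × Fin (n j)) ℂ :=
  Matrix.of fun a b => if a.1 = b.1 then 0 else 1

theorem charMatRatFunc_det_ne_zero {V : Type*} [Fintype V] [DecidableEq V]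
    (B : Matrix V V ℂ) : (charMatRatFunc B).det ≠ 0 := by
  have h : charMatRatFunc B = (algebraMap ℂ[X] (RatFunc ℂ)).mapMatrix (Matrix.charmatrix B) := by
    ext i j
    by_cases hij : i = j
    · subst hij
      simp [charMatRatFunc, Matrix.charmatrix, RatFunc.algebraMap_X, RatFunc.algebraMap_C,
        RatFunc.algebraMap_eq_C]
    · simp [charMatRatFunc, Matrix.charmatrix, hij, RatFunc.algebraMap_C,
        RatFunc.algebraMap_eq_C]
  rw [h, ← RingHom.map_det]
  intro h0
  exact (Matrix.charpoly_monic B).ne_zero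
    ((map_eq_zero_iff _ (RatFunc.algebraMap_injective ℂ)).1 h0)

theorem natCast_add_X_ne_zero (m : ℕ) : (m : RatFunc ℂ) + RatFunc.X ≠ 0 := by
  intro h
  have h1 : algebraMap ℂ[X] (RatFunc ℂ) (Polynomial.X + Polynomial.C (m : ℂ)) = 0 := by
    simpa [RatFunc.algebraMap_X, add_comm] using h
  exact Polynomial.X_add_C_ne_zero _ ((map_eq_zero_iff _ (RatFunc.algebraMap_injective ℂ)).1 h1)

/-- The coronal of the complete `k`-partite graph `K_{n₁,…,n_k}` is
`(∑ⱼ nⱼ gⱼ(λ)) / (∏ᵢ (nᵢ + λ) - ∑ⱼ nⱼ gⱼ(λ))`, where `gⱼ(λ) = ∏_{i ≠ j} (nᵢ + λ)`. -/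
theorem coronal_completeMultipartite {k : ℕ} (n : Fin k → ℕ) (hn : ∀ j, 1 ≤ n j) :
    coronal (completeMultipartiteMatrix n) =
      (∑ j, (n j : RatFunc ℂ) * ∏ i ∈ Finset.univ.erase j, ((n i : RatFunc ℂ) + RatFunc.X)) /
        (∏ i, ((n i : RatFunc ℂ) + RatFunc.X) -
          ∑ j, (n j : RatFunc ℂ) * ∏ i ∈ Finset.univ.erase j, ((n i : RatFunc ℂ) + RatFunc.X)) := by
  classical
  set S : RatFunc ℂ := ∑ j, (n j : RatFunc ℂ) * ((n j : RatFunc ℂ) + RatFunc.X)⁻¹ with hS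
  set P : RatFunc ℂ := ∏ i, ((n i : RatFunc ℂ) + RatFunc.X) with hP
  have hP0 : P ≠ 0 := Finset.prod_ne_zero_iff.2 fun i _ => natCast_add_X_ne_zero (n i)
  have hnum : (∑ j, (n j : RatFunc ℂ) *
      ∏ i ∈ Finset.univ.erase j, ((n i : RatFunc ℂ) + RatFunc.X)) = P * S := by
    rw [hS, Finset.mul_sum]
    refine Finset.sum_congr rfl fun j _ => ?_
    have h0 := natCast_add_X_ne_zero (n j)
    rw [hP, ← Finset.mul_prod_erase Finset.univ _ (Finset.mem_univ j)]
    field_simp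
  rw [hnum]
  set M := charMatRatFunc (completeMultipartiteMatrix n) with hM
  have hdet : IsUnit M.det := (charMatRatFunc_det_ne_zero _).isUnit
  let w : ((j : Fin k) × Fin (n j)) → RatFunc ℂ := fun a => ((n a.1 : RatFunc ℂ) + RatFunc.X)⁻¹
  have hwS : ∑ a, w a = S := by
    rw [Fintype.sum_sigma]
    simp [w, hS]
  have hMw : M *ᵥ w = fun _ => 1 - S := by
    funext a
    have h1 : ∀ b, M a b * w b = (if a = b then RatFunc.X * w b else 0)
        - (w b - if a.1 = b.1 then w b else 0) := by
      intro b
      by_cases hab : a = b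
      · subst hab
        simp [hM, charMatRatFunc, completeMultipartiteMatrix]
      · by_cases h2 : a.1 = b.1 <;>
          simp [hM, charMatRatFunc, completeMultipartiteMatrix, hab, h2]
    have h3 : (∑ b, if a.1 = b.1 then w b else 0) = (n a.1 : RatFunc ℂ) * w a := by
      rw [Fintype.sum_sigma]
      rw [Finset.sum_eq_single a.1]
      · simp [w]
      · intro j _ hj
        simp [Ne.symm hj]
      · simp
    have h4 : ((n a.1 : RatFunc ℂ) + RatFunc.X) * w a = 1 :=
      mul_inv_cancel₀ (natCast_add_X_ne_zero _)
    simp only [Matrix.mulVec, dotProduct]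
    rw [Finset.sum_congr rfl fun b _ => h1 b, Finset.sum_sub_distrib, Finset.sum_sub_distrib, h3,
      hwS, Finset.sum_ite_eq]
    simp only [Finset.mem_univ, if_true]
    linear_combination h4
  have hw : w = M⁻¹ *ᵥ (fun _ => 1 - S) := by
    rw [← hMw, Matrix.mulVec_mulVec, Matrix.nonsing_inv_mul _ hdet, Matrix.one_mulVec]
  have hkey : S = coronal (completeMultipartiteMatrix n) * (1 - S) := by
    rw [← hwS]
    conv_lhs => rw [hw]
    simp only [Matrix.mulVec, dotProduct, coronal, Finset.sum_mul, hwS, hM]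
  have hS1 : 1 - S ≠ 0 := by
    intro h
    rw [h, mul_zero] at hkey
    rw [hkey] at h
    simp at h
  have : P - P * S = P * (1 - S) := by ring
  rw [this, mul_div_mul_left _ _ hP0, eq_div_iff hS1]
  exact hkey.symm
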